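/- arXiv:2508.03288 — 6 statements merged into one kernel-verified Lean document; each statement's English description precedes it below -/
import Mathlib

section
/- Let α ∈ ℝ and let ψ : ℝ → ℝ be differentiable with ψ(1) = 1, ψ(−1) = −1 and ψ'(1) = ψ'(−1) = 0. Let u : ℝ → ℝ be differentiable and define v(x) = ((1−α)·u(x) + ψ(x)·u(−x))/(1 + (1−α)²). Then v is differentiable and v'(1) − (1−α)·v'(−1) = −u'(−1). -/
/-- Lemma 2.1 (extension theorem), second boundary identity:
for `v = E(α,ψ)u` one has `v'(1) − (1−α)·v'(−1) = −u'(−1)`. -/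
theorem stmt1 (α : ℝ) (ψ : ℝ → ℝ) (hψdiff : Differentiable ℝ ψ)
    (hψ1 : ψ 1 = 1) (hψm1 : ψ (-1) = -1)
    (hψ'1 : deriv ψ 1 = 0) (hψ'm1 : deriv ψ (-1) = 0)
    (u : ℝ → ℝ) (hu : Differentiable ℝ u) (v : ℝ → ℝ)
    (hv : ∀ x, v x = ((1 - α) * u x + ψ x * u (-x)) / (1 + (1 - α) ^ 2)) :
    Differentiable ℝ v ∧ deriv v 1 - (1 - α) * deriv v (-1) = -deriv u (-1) := by
  have key : ∀ x, HasDerivAt v (((1 - α) * deriv u x +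
      (deriv ψ x * u (-x) + ψ x * (-deriv u (-x)))) / (1 + (1 - α) ^ 2)) x := by
    intro x
    have h1 := (hu x).hasDerivAt
    have h2 := (hψdiff x).hasDerivAt
    have h3 : HasDerivAt (fun y => u (-y)) (-deriv u (-x)) x := by
      have h := HasDerivAt.comp x (hu (-x)).hasDerivAt (hasDerivAt_neg x)
      simpa [Function.comp_def] using h
    rw [show v = fun x => ((1 - α) * u x + ψ x * u (-x)) / (1 + (1 - α) ^ 2) from funext hv]
    exact ((h1.const_mul (1 - α)).add (h2.mul h3)).div_const _
  refine ⟨fun x => (key x).differentiableAt, ?_⟩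
  rw [(key 1).deriv, (key (-1)).deriv, hψ1, hψm1, hψ'1, hψ'm1, neg_neg]
  have hD : (1 + (1 - α) ^ 2) ≠ 0 := by positivity
  field_simp
  ring
end

section
/- Let θ, θ₀ ∈ ℝ and let ψ : ℝ → ℝ be differentiable with ψ(1) = 1, ψ(−1) = −1 and ψ'(1) = ψ'(−1) = 0. Let v : ℝ → ℝ be differentiable and satisfy the boundary conditions (1−θ)·v(1) − v(−1) = 0 and v'(1) − (1−θ)·v'(−1) = 0. Define ṽ(x) = v(x) − (θ − θ₀)·((1−θ₀)·v(x) + ψ(x)·v(−x))/(1 + (1−θ₀)²). Then ṽ satisfies the homogeneous boundary conditions with parameter θ₀: (1−θ₀)·ṽ(1) − ṽ(−1) = 0 and ṽ'(1) − (1−θ₀)·ṽ'(−1) = 0. -/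
/-- Homogenization of the FK-type boundary conditions (Section 2): if `v`
satisfies `B₁(θ;v) = B₂(θ;v) = 0`, then `ṽ = v − (θ−θ₀)E(θ₀,ψ)v` satisfies
`B₁(θ₀;ṽ) = B₂(θ₀;ṽ) = 0`. -/
theorem stmt9 (θ θ₀ : ℝ) (ψ : ℝ → ℝ) (hψdiff : Differentiable ℝ ψ)
    (hψ1 : ψ 1 = 1) (hψm1 : ψ (-1) = -1)
    (hψ'1 : deriv ψ 1 = 0) (hψ'm1 : deriv ψ (-1) = 0)
    (v : ℝ → ℝ) (hvdiff : Differentiable ℝ v)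
    (hb1 : (1 - θ) * v 1 - v (-1) = 0)
    (hb2 : deriv v 1 - (1 - θ) * deriv v (-1) = 0)
    (w : ℝ → ℝ)
    (hw : ∀ x, w x
      = v x - (θ - θ₀) * (((1 - θ₀) * v x + ψ x * v (-x)) / (1 + (1 - θ₀) ^ 2))) :
    (1 - θ₀) * w 1 - w (-1) = 0 ∧ deriv w 1 - (1 - θ₀) * deriv w (-1) = 0 := by
  have hD : (1 + (1 - θ₀) ^ 2) ≠ 0 := by positivity
  have hd : ∀ x, deriv w x = deriv v x - (θ - θ₀) * (((1 - θ₀) * deriv v x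
      + (deriv ψ x * v (-x) + ψ x * (deriv v (-x) * (-1)))) / (1 + (1 - θ₀) ^ 2)) := by
    intro x
    have h1 := (hvdiff x).hasDerivAt
    have h2 := (hψdiff x).hasDerivAt
    have h3 : HasDerivAt (fun y => v (-y)) (deriv v (-x) * (-1)) x :=
      HasDerivAt.comp x (hvdiff (-x)).hasDerivAt (hasDerivAt_neg x)
    have h4 := h1.sub ((((h1.const_mul (1 - θ₀)).add (h2.mul h3)).div_const
      (1 + (1 - θ₀) ^ 2)).const_mul (θ - θ₀))
    have hwe : w = _ := funext hw
    rw [hwe]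
    exact h4.deriv
  rw [hw, hw, hd, hd]
  simp only [neg_neg, hψ1, hψm1, hψ'1, hψ'm1]
  have e1 : v (-1) = (1 - θ) * v 1 := by linarith
  have e2 : deriv v 1 = (1 - θ) * deriv v (-1) := by linarith
  rw [e1, e2]
  constructor
  · field_simp
    ring
  · field_simp
    ring
end

section
/- Let q ∈ [1,∞), θ₀ ∈ (0,1], and let a < b be real numbers. Let φ : ℝ → ℝ be continuously differentiable on [a,b] and satisfy the boundary condition (1−θ₀)·φ(b) − φ(a) = 0. Then (∫_a^b |φ(x)|^q dx)^{1/q} ≤ (b−a)·((1+θ₀)/θ₀)·(∫_a^b |φ'(x)|^q dx)^{1/q}. -/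
open MeasureTheory in
lemma jensen_aux (q : ℝ) (hq : 1 ≤ q) (a b : ℝ) (hab : a < b) (f : ℝ → ℝ)
    (hcont : ContinuousOn f (Set.Icc a b)) :
    (∫ x in a..b, |f x|) ^ q ≤ (b - a) ^ q * (b - a)⁻¹ * ∫ x in a..b, |f x| ^ q := by
  have hba : 0 < b - a := sub_pos.2 hab
  have hc1 : ContinuousOn (fun x => |f x|) (Set.Icc a b) := hcont.abs
  have hc2 : ContinuousOn (fun x => |f x| ^ q) (Set.Icc a b) :=
    hc1.rpow_const (fun x _ => Or.inr (by linarith))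
  have hv : volume (Set.Ioc a b) = ENNReal.ofReal (b - a) := Real.volume_Ioc
  have h := (convexOn_rpow hq).map_set_average_le (μ := volume) (t := Set.Ioc a b)
    (f := fun x => |f x|)
    (ContinuousOn.rpow_const continuousOn_id (fun x _ => Or.inr (by linarith)))
    isClosed_Ici (by rw [hv]; simpa using hab) (by rw [hv]; simp)
    (Filter.Eventually.of_forall fun x => Set.mem_Ici.2 (abs_nonneg _))
    (hc1.integrableOn_Icc.mono_set Set.Ioc_subset_Icc_self)
    (hc2.integrableOn_Icc.mono_set Set.Ioc_subset_Icc_self)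
  simp only [setAverage_eq, smul_eq_mul, Function.comp_def, measureReal_def, hv,
    ENNReal.toReal_ofReal hba.le] at h
  rw [← intervalIntegral.integral_of_le hab.le, ← intervalIntegral.integral_of_le hab.le] at h
  have hJ : 0 ≤ ∫ x in a..b, |f x| :=
    intervalIntegral.integral_nonneg hab.le (fun x _ => abs_nonneg _)
  rw [Real.mul_rpow (by positivity) hJ, Real.inv_rpow hba.le] at h
  have hp : 0 < (b - a) ^ q := Real.rpow_pos_of_pos hba q
  rw [inv_mul_le_iff₀ hp] at h
  linarith

/-- Lemma 3.1 (one-dimensional Poincaré-type inequality): if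
`(1−θ₀)φ(b) − φ(a) = 0` then
`‖φ‖_{L^q(a,b)} ≤ (b−a)·((1+θ₀)/θ₀)·‖φ'‖_{L^q(a,b)}`. -/
theorem stmt10 (q : ℝ) (hq : 1 ≤ q) (θ₀ : ℝ) (hθ₀ : θ₀ ∈ Set.Ioc (0 : ℝ) 1)
    (a b : ℝ) (hab : a < b) (φ φ' : ℝ → ℝ)
    (hderiv : ∀ x ∈ Set.Icc a b, HasDerivAt φ (φ' x) x)
    (hcont : ContinuousOn φ' (Set.Icc a b))
    (hbc : (1 - θ₀) * φ b - φ a = 0) :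
    (∫ x in a..b, |φ x| ^ q) ^ (1 / q)
      ≤ (b - a) * ((1 + θ₀) / θ₀) * (∫ x in a..b, |φ' x| ^ q) ^ (1 / q) := by
  obtain ⟨ht, -⟩ := hθ₀
  have hba : 0 < b - a := sub_pos.2 hab
  have hq0 : 0 < q := by linarith
  have hJn : 0 ≤ ∫ x in a..b, |φ' x| :=
    intervalIntegral.integral_nonneg hab.le (fun x _ => abs_nonneg _)
  have hKn : 0 ≤ ∫ x in a..b, |φ' x| ^ q :=
    intervalIntegral.integral_nonneg hab.le (fun x _ => by positivity)
  have hIn : 0 ≤ ∫ x in a..b, |φ x| ^ q :=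
    intervalIntegral.integral_nonneg hab.le (fun x _ => by positivity)
  have hjen := jensen_aux q hq a b hab φ' hcont
  have hφc : ContinuousOn φ (Set.Icc a b) := fun x hx => (hderiv x hx).continuousAt.continuousWithinAt
  have hint : IntervalIntegrable (fun x => |φ' x|) MeasureTheory.volume a b :=
    (hcont.abs).intervalIntegrable_of_Icc hab.le
  have key : ∀ x ∈ Set.Icc a b, |φ b - φ x| ≤ ∫ x in a..b, |φ' x| := by
    intro x hx
    have hs : Set.Icc x b ⊆ Set.Icc a b := Set.Icc_subset_Icc_left hx.1
    rw [← intervalIntegral.integral_eq_sub_of_hasDerivAt (f' := φ')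
      (fun y hy => hderiv y (hs (by rwa [Set.uIcc_of_le hx.2] at hy)))
      ((hcont.mono hs).intervalIntegrable_of_Icc hx.2)]
    refine (intervalIntegral.abs_integral_le_integral_abs hx.2).trans ?_
    exact intervalIntegral.integral_mono_interval hx.1 hx.2 le_rfl
      (Filter.Eventually.of_forall fun x => abs_nonneg _) hint
  set J := ∫ x in a..b, |φ' x| with hJ
  set C := (1 + θ₀) / θ₀ with hC
  have hCn : 0 ≤ C := by positivity
  have hb : |φ b| ≤ J / θ₀ := by
    have h := key a ⟨le_rfl, hab.le⟩
    have e : φ b - φ a = θ₀ * φ b := by linarith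
    rw [e, abs_mul, abs_of_pos ht] at h
    rw [le_div_iff₀ ht]; linarith
  have hpt : ∀ x ∈ Set.Icc a b, |φ x| ≤ C * J := by
    intro x hx
    have h := key x hx
    have h2 : |φ x| ≤ |φ b| + |φ b - φ x| := by
      have := abs_sub (φ b) (φ b - φ x)
      simpa using this
    have e : C * J = J / θ₀ + J := by rw [hC]; field_simp
    linarith
  have hI : ∫ x in a..b, |φ x| ^ q ≤ (b - a) * (C * J) ^ q := by
    have := intervalIntegral.integral_mono_on (μ := MeasureTheory.volume) (f := fun x => |φ x| ^ q) (g := fun _ => (C * J) ^ q) hab.le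
      ((hφc.abs.rpow_const (fun x _ => Or.inr hq0.le)).intervalIntegrable_of_Icc hab.le)
      intervalIntegrable_const
      (fun x hx => Real.rpow_le_rpow (abs_nonneg _) (hpt x hx) hq0.le)
    simpa using this
  set K := ∫ x in a..b, |φ' x| ^ q with hK
  have hfin : ∫ x in a..b, |φ x| ^ q ≤ ((b - a) * C) ^ q * K := by
    refine hI.trans ?_
    rw [Real.mul_rpow hCn hJn, Real.mul_rpow hba.le hCn]
    calc (b - a) * (C ^ q * J ^ q)
        ≤ (b - a) * (C ^ q * ((b - a) ^ q * (b - a)⁻¹ * K)) := by gcongr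
      _ = (b - a) ^ q * C ^ q * K := by field_simp
  calc _ ≤ (((b - a) * C) ^ q * K) ^ (1 / q) :=
        Real.rpow_le_rpow hIn hfin (by positivity)
    _ = _ := by
      rw [Real.mul_rpow (by positivity) hKn, one_div, Real.rpow_rpow_inv (by positivity) hq0.ne']
end

section
/- Let θ ∈ ℝ and let u, v : ℝ → ℝ be twice continuously differentiable on [−1,1], both satisfying the boundary conditions (1−θ)·u(1) = u(−1), u'(1) = (1−θ)·u'(−1), and (1−θ)·v(1) = v(−1), v'(1) = (1−θ)·v'(−1). Then ∫_{−1}^{1} u''(x)·v(x) dx = ∫_{−1}^{1} u(x)·v''(x) dx. -/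
/-- Symmetry identity underlying self-adjointness of `−∂ₓ²` with FK-type
boundary conditions: `∫_{−1}^{1} u''·v = ∫_{−1}^{1} u·v''`. -/
theorem stmt13 (θ : ℝ) (u u' u'' v v' v'' : ℝ → ℝ)
    (hu' : ∀ x ∈ Set.Icc (-1 : ℝ) 1, HasDerivAt u (u' x) x)
    (hu'' : ∀ x ∈ Set.Icc (-1 : ℝ) 1, HasDerivAt u' (u'' x) x)
    (hucont : ContinuousOn u'' (Set.Icc (-1 : ℝ) 1))
    (hv' : ∀ x ∈ Set.Icc (-1 : ℝ) 1, HasDerivAt v (v' x) x)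
    (hv'' : ∀ x ∈ Set.Icc (-1 : ℝ) 1, HasDerivAt v' (v'' x) x)
    (hvcont : ContinuousOn v'' (Set.Icc (-1 : ℝ) 1))
    (hub1 : (1 - θ) * u 1 = u (-1))
    (hub2 : u' 1 = (1 - θ) * u' (-1))
    (hvb1 : (1 - θ) * v 1 = v (-1))
    (hvb2 : v' 1 = (1 - θ) * v' (-1)) :
    (∫ x in (-1 : ℝ)..1, u'' x * v x) = ∫ x in (-1 : ℝ)..1, u x * v'' x := by
  have hI : Set.uIcc (-1 : ℝ) 1 = Set.Icc (-1 : ℝ) 1 := Set.uIcc_of_le (by norm_num)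
  have cu : ContinuousOn u (Set.Icc (-1 : ℝ) 1) :=
    fun x hx => (hu' x hx).continuousAt.continuousWithinAt
  have cv : ContinuousOn v (Set.Icc (-1 : ℝ) 1) :=
    fun x hx => (hv' x hx).continuousAt.continuousWithinAt
  have i1 : IntervalIntegrable (fun x => u'' x * v x) MeasureTheory.volume (-1) 1 :=
    ContinuousOn.intervalIntegrable (by rw [hI]; exact hucont.mul cv)
  have i2 : IntervalIntegrable (fun x => u x * v'' x) MeasureTheory.volume (-1) 1 :=
    ContinuousOn.intervalIntegrable (by rw [hI]; exact cu.mul hvcont)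
  have key : (∫ x in (-1 : ℝ)..1, (u'' x * v x - u x * v'' x))
      = (u' 1 * v 1 - u 1 * v' 1) - (u' (-1) * v (-1) - u (-1) * v' (-1)) := by
    refine intervalIntegral.integral_eq_sub_of_hasDerivAt
      (f := fun x => u' x * v x - u x * v' x) (fun x hx => ?_) (i1.sub i2)
    rw [hI] at hx
    have h := ((hu'' x hx).mul (hv' x hx)).sub ((hu' x hx).mul (hv'' x hx))
    refine HasDerivAt.congr_deriv h ?_
    ring
  rw [intervalIntegral.integral_sub i1 i2, hub2, hvb2, ← hub1, ← hvb1] at key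
  linear_combination key
end

section
/- Let θ₀ ∈ (0,1] and λ ∈ ℂ. Suppose u : ℝ → ℂ is twice continuously differentiable on [−1,1], is not identically zero on [−1,1], satisfies u''(x) = λ·u(x) for all x ∈ [−1,1], and satisfies the boundary conditions (1−θ₀)·u(1) = u(−1) and u'(1) = (1−θ₀)·u'(−1). Then λ is a real number and λ ≤ −θ₀²/(4(1+θ₀)²) < 0. -/
/-- Spectral claim in the proof of Lemma 3.3: every eigenvalue `λ` of `∂ₓ²`
with FK-type boundary conditions is real and satisfies
`λ ≤ −θ₀²/(4(1+θ₀)²) < 0`. -/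
theorem stmt14 (θ₀ : ℝ) (hθ₀ : θ₀ ∈ Set.Ioc (0 : ℝ) 1) (l : ℂ) (u u' u'' : ℝ → ℂ)
    (hu' : ∀ x ∈ Set.Icc (-1 : ℝ) 1, HasDerivAt u (u' x) x)
    (hu'' : ∀ x ∈ Set.Icc (-1 : ℝ) 1, HasDerivAt u' (u'' x) x)
    (hcont : ContinuousOn u'' (Set.Icc (-1 : ℝ) 1))
    (hne : ∃ x ∈ Set.Icc (-1 : ℝ) 1, u x ≠ 0)
    (heq : ∀ x ∈ Set.Icc (-1 : ℝ) 1, u'' x = l * u x)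
    (hb1 : (1 - (θ₀ : ℂ)) * u 1 = u (-1))
    (hb2 : u' 1 = (1 - (θ₀ : ℂ)) * u' (-1)) :
    l.im = 0 ∧ l.re ≤ -θ₀ ^ 2 / (4 * (1 + θ₀) ^ 2) ∧
      -θ₀ ^ 2 / (4 * (1 + θ₀) ^ 2) < 0 := by
  obtain ⟨h0, h1⟩ := hθ₀
  have hle : (-1 : ℝ) ≤ 1 := by norm_num
  have huI : Set.uIcc (-1 : ℝ) 1 = Set.Icc (-1) 1 := Set.uIcc_of_le hle
  have cu : ContinuousOn u (Set.Icc (-1 : ℝ) 1) := fun x hx =>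
    (hu' x hx).continuousAt.continuousWithinAt
  have cu' : ContinuousOn u' (Set.Icc (-1 : ℝ) 1) := fun x hx =>
    (hu'' x hx).continuousAt.continuousWithinAt
  have cU : ContinuousOn (fun x => ‖u x‖ ^ 2) (Set.Icc (-1 : ℝ) 1) := cu.norm.pow 2
  have cV : ContinuousOn (fun x => ‖u' x‖ ^ 2) (Set.Icc (-1 : ℝ) 1) := cu'.norm.pow 2
  have iU : IntervalIntegrable (fun x => ‖u x‖ ^ 2) MeasureTheory.volume (-1) 1 :=
    cU.intervalIntegrable_of_Icc hle
  have iV : IntervalIntegrable (fun x => ‖u' x‖ ^ 2) MeasureTheory.volume (-1) 1 :=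
    cV.intervalIntegrable_of_Icc hle
  have iW : IntervalIntegrable (fun x => ‖u' x‖) MeasureTheory.volume (-1) 1 :=
    cu'.norm.intervalIntegrable_of_Icc hle
  obtain ⟨U, hU⟩ : ∃ U, U = ∫ x in (-1 : ℝ)..1, ‖u x‖ ^ 2 := ⟨_, rfl⟩
  obtain ⟨V, hV⟩ : ∃ V, V = ∫ x in (-1 : ℝ)..1, ‖u' x‖ ^ 2 := ⟨_, rfl⟩
  obtain ⟨W, hW⟩ : ∃ W, W = ∫ x in (-1 : ℝ)..1, ‖u' x‖ := ⟨_, rfl⟩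
  have hUpos : 0 < U := by
    rw [hU]
    apply intervalIntegral.integral_pos (by norm_num) cU (fun x _ => by positivity)
    obtain ⟨c, hc, hc'⟩ := hne
    exact ⟨c, hc, by positivity⟩
  have hW0 : 0 ≤ W := by
    rw [hW]
    exact intervalIntegral.integral_nonneg hle (fun x _ => norm_nonneg _)
  have hWV : W ^ 2 ≤ 2 * V := by
    have h : 0 ≤ ∫ x in (-1 : ℝ)..1, (‖u' x‖ ^ 2 - W * ‖u' x‖ + W ^ 2 / 4) :=
      intervalIntegral.integral_nonneg hle
        (fun x _ => by nlinarith [sq_nonneg (‖u' x‖ - W / 2)])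
    rw [intervalIntegral.integral_add (iV.sub (iW.const_mul W)) (by simp),
      intervalIntegral.integral_sub iV (iW.const_mul W),
      intervalIntegral.integral_const_mul, ← hV, ← hW,
      intervalIntegral.integral_const] at h
    simp only [smul_eq_mul] at h
    nlinarith
  -- pointwise increment bound
  have key : ∀ x ∈ Set.Icc (-1 : ℝ) 1, ‖u 1 - u x‖ ≤ W := by
    intro x hx
    have hsub : Set.Icc x 1 ⊆ Set.Icc (-1 : ℝ) 1 := Set.Icc_subset_Icc_left hx.1
    have e : ∫ y in x..1, u' y = u 1 - u x := by
      apply intervalIntegral.integral_eq_sub_of_hasDerivAt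
      · intro y hy
        rw [Set.uIcc_of_le hx.2] at hy
        exact hu' y (hsub hy)
      · exact (cu'.mono hsub).intervalIntegrable_of_Icc hx.2
    rw [← e, hW]
    refine (intervalIntegral.norm_integral_le_integral_norm hx.2).trans ?_
    exact intervalIntegral.integral_mono_interval hx.1 hx.2 le_rfl
      (Filter.Eventually.of_forall fun y => norm_nonneg _) iW
  have hu1 : θ₀ * ‖u 1‖ ≤ W := by
    have h := key (-1) ⟨le_rfl, hle⟩
    have e : u 1 - u (-1) = (θ₀ : ℂ) * u 1 := by rw [← hb1]; ring
    rw [e, norm_mul, Complex.norm_real, Real.norm_of_nonneg h0.le] at h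
    exact h
  have hpt : ∀ x ∈ Set.Icc (-1 : ℝ) 1, θ₀ ^ 2 * ‖u x‖ ^ 2 ≤ (1 + θ₀) ^ 2 * W ^ 2 := by
    intro x hx
    have h := key x hx
    have t : ‖u x‖ ≤ ‖u 1‖ + ‖u 1 - u x‖ := by
      have := norm_sub_le (u 1) (u 1 - u x)
      simpa using this
    have : θ₀ * ‖u x‖ ≤ (1 + θ₀) * W := by nlinarith
    have h2 := pow_le_pow_left₀ (by positivity) this 2
    simpa [mul_pow] using h2
  have hUW : θ₀ ^ 2 * U ≤ 2 * ((1 + θ₀) ^ 2 * W ^ 2) := by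
    have h := intervalIntegral.integral_mono_on hle (iU.const_mul (θ₀ ^ 2))
      (intervalIntegrable_const (c := (1 + θ₀) ^ 2 * W ^ 2)) hpt
    rw [intervalIntegral.integral_const_mul, ← hU, intervalIntegral.integral_const] at h
    simp only [smul_eq_mul] at h
    linarith
  have hUV : θ₀ ^ 2 * U ≤ 4 * (1 + θ₀) ^ 2 * V := by
    nlinarith [mul_le_mul_of_nonneg_left hWV (sq_nonneg (1 + θ₀))]
  have iUc : IntervalIntegrable (fun x => ((‖u x‖ ^ 2 : ℝ) : ℂ)) MeasureTheory.volume (-1) 1 :=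
    (Complex.continuous_ofReal.comp_continuousOn cU).intervalIntegrable_of_Icc hle
  have iVc : IntervalIntegrable (fun x => ((‖u' x‖ ^ 2 : ℝ) : ℂ)) MeasureTheory.volume (-1) 1 :=
    (Complex.continuous_ofReal.comp_continuousOn cV).intervalIntegrable_of_Icc hle
  have hI : l * (U : ℂ) + (V : ℂ) = 0 := by
    have e : ∫ x in (-1 : ℝ)..1, (l * ((‖u x‖ ^ 2 : ℝ) : ℂ) + ((‖u' x‖ ^ 2 : ℝ) : ℂ))
        = u' 1 * star (u 1) - u' (-1) * star (u (-1)) := by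
      apply intervalIntegral.integral_eq_sub_of_hasDerivAt (f := fun x => u' x * star (u x))
      · intro y hy
        rw [huI] at hy
        have h := (hu'' y hy).mul (hu' y hy).star
        have e2 : l * ((‖u y‖ ^ 2 : ℝ) : ℂ) + ((‖u' y‖ ^ 2 : ℝ) : ℂ)
            = u'' y * star (u y) + u' y * star (u' y) := by
          rw [heq y hy, mul_assoc]
          simp [Complex.mul_conj, Complex.normSq_eq_norm_sq]
        rw [e2]
        exact h
      · exact (iUc.const_mul l).add iVc
    have b : u' 1 * star (u 1) - u' (-1) * star (u (-1)) = 0 := by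
      rw [hb2, ← hb1]
      simp
      ring
    rw [b, intervalIntegral.integral_add (iUc.const_mul l) iVc,
      intervalIntegral.integral_const_mul, intervalIntegral.integral_ofReal,
      intervalIntegral.integral_ofReal, ← hU, ← hV] at e
    exact e
  have hre := congrArg Complex.re hI
  have him := congrArg Complex.im hI
  simp at hre him
  refine ⟨him.resolve_right hUpos.ne', ?_, ?_⟩
  · rw [le_div_iff₀ (by positivity)]
    have : (l.re * (4 * (1 + θ₀) ^ 2)) * U ≤ (-θ₀ ^ 2) * U := by
      have : V = - (l.re * U) := by linarith
      rw [this] at hUV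
      nlinarith
    exact le_of_mul_le_mul_right this hUpos
  · rw [neg_div]
    exact neg_neg_of_pos (by positivity)
end

section
/- Let θ₀ ∈ (0,1] and μ ∈ ℂ with μ ≠ 0. If ((1−θ₀)e^{μ} − e^{−μ})² + (e^{μ} − (1−θ₀)e^{−μ})² = 0, then μ² is a real number and μ² < 0. -/
/-- Zeros of the boundary determinant (Lemma 3.3): if `θ₀ ∈ (0,1]`, `μ ≠ 0`
and `M(μ²) = 0`, then `λ = μ²` is negative real. -/
theorem stmt17 (θ₀ : ℝ) (hθ₀ : θ₀ ∈ Set.Ioc (0 : ℝ) 1) (μ : ℂ) (hμ : μ ≠ 0)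
    (hM : ((1 - (θ₀ : ℂ)) * Complex.exp μ - Complex.exp (-μ)) ^ 2
        + (Complex.exp μ - (1 - (θ₀ : ℂ)) * Complex.exp (-μ)) ^ 2 = 0) :
    (μ ^ 2).im = 0 ∧ (μ ^ 2).re < 0 := by
  obtain ⟨h0, h1⟩ := hθ₀
  obtain ⟨a, ha⟩ : ∃ a : ℝ, a = 1 - θ₀ := ⟨_, rfl⟩
  have hac : (1 - (θ₀ : ℂ)) = (a : ℂ) := by rw [ha]; push_cast; rfl
  rw [hac] at hM
  have hEF : Complex.exp μ * Complex.exp (-μ) = 1 := by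
    rw [← Complex.exp_add]; simp
  obtain ⟨z, hz⟩ : ∃ z : ℂ, z = Complex.exp μ ^ 2 := ⟨_, rfl⟩
  have key : (1 + (a : ℂ) ^ 2) * (z * z + 1) = 4 * a * z := by
    rw [hz]
    generalize Complex.exp μ = e at *
    generalize Complex.exp (-μ) = f at *
    have h2 : e ^ 2 * f ^ 2 = 1 := by rw [← mul_pow, hEF, one_pow]
    linear_combination e ^ 2 * hM - (1 + (a : ℂ) ^ 2) * h2 + 4 * a * e ^ 2 * hEF
  have key' : (((1 + a ^ 2 : ℝ) : ℂ)) * (z * z + 1) = ((4 * a : ℝ) : ℂ) * z := by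
    push_cast; exact key
  have hre := congrArg Complex.re key'
  have him := congrArg Complex.im key'
  rw [Complex.re_ofReal_mul, Complex.re_ofReal_mul] at hre
  rw [Complex.im_ofReal_mul, Complex.im_ofReal_mul] at him
  simp only [Complex.add_re, Complex.add_im, Complex.mul_re, Complex.mul_im, Complex.one_re,
    Complex.one_im] at hre him
  have hk : 0 < 1 + a ^ 2 := by positivity
  have hn : z.re * z.re + z.im * z.im = 1 := by
    generalize z.re = p at *
    generalize z.im = q at *
    by_cases hq : q = 0
    · exfalso
      subst hq
      have ha0 : 0 ≤ a := by linarith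
      have ha1 : a < 1 := by linarith
      have h3 : 0 < (1 - a) ^ 2 * (1 + a) ^ 2 := by
        have : 0 < 1 - a := by linarith
        positivity
      have h4 : ((1 + a ^ 2) * p - 2 * a) ^ 2 + (1 - a) ^ 2 * (1 + a) ^ 2 = 0 := by
        linear_combination (1 + a ^ 2) * hre
      nlinarith [sq_nonneg ((1 + a ^ 2) * p - 2 * a)]
    · have h5 : (1 + a ^ 2) * p = 2 * a := by
        apply mul_right_cancel₀ hq
        linear_combination him / 2
      apply mul_left_cancel₀ hk.ne'
      linear_combination -hre + 2 * p * h5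
  have hns : Complex.normSq z = 1 := by rw [Complex.normSq_apply]; exact hn
  have hx : μ.re = 0 := by
    rw [hz, map_pow, Complex.normSq_eq_norm_sq, Complex.norm_exp, ← Real.exp_nat_mul,
      ← Real.exp_nat_mul, Real.exp_eq_one_iff] at hns
    push_cast at hns
    linarith
  have hy : μ.im ≠ 0 := fun h => hμ (Complex.ext hx h)
  have : 0 < μ.im * μ.im := mul_self_pos.mpr hy
  rw [pow_two, Complex.mul_im, Complex.mul_re, hx]
  constructor
  · ring
  · linarith
end
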